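/- Let (M,E,η) be a factorable monoid and x ∈ M with word length N(x) = k. Define x_j = η′(η̄^{j−1}(x)) for 1 ≤ j ≤ k (i.e., split off η′ repeatedly). Then x = x_k·x_{k−1}⋯x_1 with all x_j ∈ E, and the tuple (x_k,…,x_1) is everywhere stable: η(x_{j+1}·x_j) = (x_{j+1}, x_j) for all 1 ≤ j ≤ k−1. -/

import Mathlib

/-- The word length of `m` with respect to the generating set `E`:
the least `n` such that `m` is a product of `n` elements of `E`. -/
noncomputable def wordLength {M : Type*} [Monoid M] (E : Set M) (m : M) : ℕ :=
  sInf {n | ∃ l : List M, (∀ x ∈ l, x ∈ E) ∧ l.length = n ∧ l.prod = m}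

/-- `E` is a generating set of the monoid `M`. -/
def IsGenSet {M : Type*} [Monoid M] (E : Set M) : Prop :=
  ∀ m : M, ∃ l : List M, (∀ x ∈ l, x ∈ E) ∧ l.prod = m

/-- The pair `(a, b)` is geodesic with respect to `E`. -/
noncomputable def Geodesic {M : Type*} [Monoid M] (E : Set M) (a b : M) : Prop :=
  wordLength E (a * b) = wordLength E a + wordLength E b

/-- A factorization map `η = (η̄, η′)` on `(M, E)`. -/
noncomputable def IsFactorizationMap {M : Type*} [Monoid M] (E : Set M)
    (η : M → M × M) : Prop :=
  (∀ m, (η m).1 * (η m).2 = m) ∧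
  (∀ m, wordLength E m = wordLength E (η m).1 + wordLength E (η m).2) ∧
  (∀ m, m ≠ 1 → (η m).2 ∈ E) ∧
  η 1 = (1, 1)

/-- The map `f₁ : M³ → M³` applying `η` to the product of the two right entries,
with triples written `(x₃, x₂, x₁)`. -/
def f1 {M : Type*} [Monoid M] (η : M → M × M) (p : M × M × M) : M × M × M :=
  (p.1, η (p.2.1 * p.2.2))

/-- The map `f₂ : M³ → M³` applying `η` to the product of the two left entries. -/
def f2 {M : Type*} [Monoid M] (η : M → M × M) (p : M × M × M) : M × M × M :=
  ((η (p.1 * p.2.1)).1, (η (p.1 * p.2.1)).2, p.2.2)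

/-- The sum of the word lengths of the entries of a triple. -/
noncomputable def tnorm {M : Type*} [Monoid M] (E : Set M) (p : M × M × M) : ℕ :=
  wordLength E p.1 + wordLength E p.2.1 + wordLength E p.2.2

/-- `η` is a factorability structure on `(M, E)`: it is a factorization map and the
three maps `f₁f₂f₁f₂`, `f₂f₁f₂`, `f₂f₁f₂f₁ : M³ → M³` are equal in the graded sense. -/
noncomputable def IsFactorable {M : Type*} [Monoid M] (E : Set M) (η : M → M × M) : Prop :=
  IsFactorizationMap E η ∧
  ∀ p : M × M × M,
    (f1 η (f2 η (f1 η (f2 η p))) = f2 η (f1 η (f2 η p)) ∧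
     f2 η (f1 η (f2 η p)) = f2 η (f1 η (f2 η (f1 η p)))) ∨
    (tnorm E (f1 η (f2 η (f1 η (f2 η p)))) < tnorm E p ∧
     tnorm E (f2 η (f1 η (f2 η p))) < tnorm E p ∧
     tnorm E (f2 η (f1 η (f2 η (f1 η p)))) < tnorm E p)

/-- `η` is a weak factorability structure on `(M, E)`. -/
noncomputable def IsWeaklyFactorable {M : Type*} [Monoid M] (E : Set M)
    (η : M → M × M) : Prop :=
  IsFactorizationMap E η ∧
  ∀ x : M, ∀ t ∈ E,
    Geodesic E (η x).2 t →
    Geodesic E (η x).1 (η ((η x).2 * t)).1 →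
    Geodesic E x t ∧
    (η (x * t)).2 = (η ((η x).2 * t)).2 ∧
    (η (x * t)).1 = (η x).1 * (η ((η x).2 * t)).1

/-- `η` satisfies the recognition principle. -/
def RecognitionPrinciple {M : Type*} [Monoid M] (E : Set M) (η : M → M × M) : Prop :=
  ∀ m : M, ∀ a ∈ E, (η (m * a) = (m, a) ↔ η ((η m).2 * a) = ((η m).2, a))

/-!
Put `y = η̄^{j-1}(x)`. The map `f₂f₁f₂` sends the triple `(η̄ y, η′ y, 1)` to
`(η̄² y, η′(η̄ y), η′ y)`: the first `f₂` does nothing, `f₁` moves the generator `η′ y` past the `1`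
to the right end, and the last `f₂` splits `η̄ y`. By (F2) no length is lost, so the graded identity
`f₁f₂f₁f₂ = f₂f₁f₂` holds on this triple: `f₁` fixes its image, that is, the two right entries
`(x_{j+1}, x_j)` form a stable pair. Since each splitting lowers the length by one, `η̄^k(x) = 1`
for `k = N(x)`, so that `x_k ⋯ x_1 = x`.
-/

section WordLength

variable {M : Type*} [Monoid M]

theorem wordLength_one (E : Set M) : wordLength E 1 = 0 :=
  Nat.sInf_eq_zero.2 (Or.inl ⟨[], by simp⟩)

theorem wordLength_eq_one {E : Set M} {a : M} (ha : a ∈ E) (ha1 : a ≠ 1) :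
    wordLength E a = 1 := by
  have h_mem : 1 ∈ {n | ∃ l : List M, (∀ x ∈ l, x ∈ E) ∧ l.length = n ∧ l.prod = a} :=
    ⟨[a], by simpa using ha⟩
  refine le_antisymm (Nat.sInf_le h_mem) (Nat.one_le_iff_ne_zero.2 fun h0 => ha1 ?_)
  obtain ⟨l, -, hlen, hprod⟩ := Nat.sInf_mem ⟨1, h_mem⟩
  rw [← hprod, List.length_eq_zero_iff.1 (hlen.trans h0), List.prod_nil]

end WordLength

section NormalForm

variable {M : Type*}

/-- The pair `(a, b)` is stable, i.e. fixed by recombining its entries and splitting with `η`. -/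
def IsStablePair [Mul M] (η : M → M × M) (a b : M) : Prop :=
  η (a * b) = (a, b)

/-- The element `η̄ⁿ(x)` that remains after splitting off `n` right factors from `x`. -/
def remainder (η : M → M × M) (x : M) (n : ℕ) : M :=
  (fun m => (η m).1)^[n] x

/-- The `n`-th right factor `η′(η̄ⁿ(x))` split off from `x`. Indices start at `0`, so this is
`x_{n+1}` in the paper's notation. -/
def letter (η : M → M × M) (x : M) (n : ℕ) : M :=
  (η (remainder η x n)).2

theorem remainder_succ (η : M → M × M) (x : M) (n : ℕ) :
    remainder η x (n + 1) = (η (remainder η x n)).1 :=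
  Function.iterate_succ_apply' _ n x

end NormalForm

namespace IsFactorizationMap

variable {M : Type*} [Monoid M] {E : Set M} {η : M → M × M}

theorem fst_mul_snd (hη : IsFactorizationMap E η) (m : M) : (η m).1 * (η m).2 = m :=
  hη.1 m

theorem wordLength_fst_add_snd (hη : IsFactorizationMap E η) (m : M) :
    wordLength E (η m).1 + wordLength E (η m).2 = wordLength E m :=
  (hη.2.1 m).symm

theorem snd_mem (hη : IsFactorizationMap E η) {m : M} (hm : m ≠ 1) : (η m).2 ∈ E :=
  hη.2.2.1 m hm

theorem apply_one (hη : IsFactorizationMap E η) : η 1 = (1, 1) :=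
  hη.2.2.2

theorem wordLength_fst_add_one (hη : IsFactorizationMap E η) (h1 : (1 : M) ∉ E) {m : M}
    (hm : m ≠ 1) : wordLength E (η m).1 + 1 = wordLength E m := by
  have h_snd : (η m).2 ∈ E := hη.snd_mem hm
  rw [← hη.wordLength_fst_add_snd m, wordLength_eq_one h_snd (ne_of_mem_of_not_mem h_snd h1)]

theorem wordLength_eq_zero_iff (hη : IsFactorizationMap E η) (h1 : (1 : M) ∉ E) {m : M} :
    wordLength E m = 0 ↔ m = 1 := by
  refine ⟨fun h0 => by_contra fun hm => ?_, fun hm => hm ▸ wordLength_one E⟩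
  exact Nat.succ_ne_zero _ ((hη.wordLength_fst_add_one h1 hm).trans h0)

theorem wordLength_fst (hη : IsFactorizationMap E η) (h1 : (1 : M) ∉ E) (m : M) :
    wordLength E (η m).1 = wordLength E m - 1 := by
  obtain rfl | hm := eq_or_ne m 1
  · simp [hη.apply_one, wordLength_one]
  · exact Nat.eq_sub_of_add_eq (hη.wordLength_fst_add_one h1 hm)

theorem apply_of_mem (hη : IsFactorizationMap E η) (h1 : (1 : M) ∉ E) {a : M} (ha : a ∈ E) :
    η a = (1, a) := by
  have h_fst : (η a).1 = 1 := by
    rw [← hη.wordLength_eq_zero_iff h1, hη.wordLength_fst h1,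
      wordLength_eq_one ha (ne_of_mem_of_not_mem ha h1)]
  have h_snd : (η a).2 = a := by
    simpa only [h_fst, one_mul] using hη.fst_mul_snd a
  exact Prod.ext h_fst h_snd

theorem apply_snd (hη : IsFactorizationMap E η) (h1 : (1 : M) ∉ E) (m : M) :
    η (η m).2 = (1, (η m).2) := by
  obtain rfl | hm := eq_or_ne m 1
  · simp only [hη.apply_one]
  · exact hη.apply_of_mem h1 (hη.snd_mem hm)

theorem wordLength_remainder (hη : IsFactorizationMap E η) (h1 : (1 : M) ∉ E) (x : M) (n : ℕ) :
    wordLength E (remainder η x n) = wordLength E x - n := by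
  induction n with
  | zero => rfl
  | succ n ih => rw [remainder_succ, hη.wordLength_fst h1, ih, Nat.sub_sub]

theorem remainder_wordLength (hη : IsFactorizationMap E η) (h1 : (1 : M) ∉ E) (x : M) :
    remainder η x (wordLength E x) = 1 := by
  rw [← hη.wordLength_eq_zero_iff h1, hη.wordLength_remainder h1, Nat.sub_self]

theorem letter_mem (hη : IsFactorizationMap E η) (h1 : (1 : M) ∉ E) {x : M} {n : ℕ}
    (hn : n < wordLength E x) : letter η x n ∈ E := by
  refine hη.snd_mem fun h_one => Nat.sub_ne_zero_of_lt hn ?_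
  rw [← hη.wordLength_remainder h1, h_one, wordLength_one]

theorem remainder_mul_prod_letter (hη : IsFactorizationMap E η) (x : M) (n : ℕ) :
    remainder η x n * ((List.range n).map fun i => letter η x (n - i - 1)).prod = x := by
  induction n with
  | zero => exact mul_one x
  | succ n ih =>
    have h_prod : ((List.range (n + 1)).map fun i => letter η x (n + 1 - i - 1)).prod =
        letter η x n * ((List.range n).map fun i => letter η x (n - i - 1)).prod := by
      simp [List.range_succ_eq_map, Function.comp_def]
    rw [h_prod, ← mul_assoc, remainder_succ, letter, hη.fst_mul_snd, ih]

theorem prod_letter (hη : IsFactorizationMap E η) (h1 : (1 : M) ∉ E) (x : M) :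
    ((List.range (wordLength E x)).map fun i => letter η x (wordLength E x - i - 1)).prod = x := by
  simpa only [hη.remainder_wordLength h1, one_mul] using
    hη.remainder_mul_prod_letter x (wordLength E x)

theorem f2_f1_f2_fst_snd_one (hη : IsFactorizationMap E η) (h1 : (1 : M) ∉ E) (y : M) :
    f2 η (f1 η (f2 η ((η y).1, (η y).2, 1))) =
      ((η (η y).1).1, (η (η y).1).2, (η y).2) := by
  simp only [f1, f2, hη.fst_mul_snd, mul_one, hη.apply_snd h1]

end IsFactorizationMap

namespace IsFactorable

variable {M : Type*} [Monoid M] {E : Set M} {η : M → M × M}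

theorem f1_f2_f1_f2_of_tnorm_le (hfac : IsFactorable E η) {p : M × M × M}
    (hp : tnorm E p ≤ tnorm E (f2 η (f1 η (f2 η p)))) :
    f1 η (f2 η (f1 η (f2 η p))) = f2 η (f1 η (f2 η p)) := by
  rcases hfac.2 p with ⟨h_eq, -⟩ | ⟨-, h_lt, -⟩
  · exact h_eq
  · exact absurd h_lt hp.not_gt

theorem isStablePair_snd_fst_snd (hfac : IsFactorable E η) (h1 : (1 : M) ∉ E) (y : M) :
    IsStablePair η (η (η y).1).2 (η y).2 := by
  have hη : IsFactorizationMap E η := hfac.1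
  have h_image := hη.f2_f1_f2_fst_snd_one h1 y
  have h_norm : tnorm E ((η y).1, (η y).2, 1) =
      tnorm E ((η (η y).1).1, (η (η y).1).2, (η y).2) := by
    simp only [tnorm, wordLength_one, add_zero, hη.wordLength_fst_add_snd]
  have h_fixed := hfac.f1_f2_f1_f2_of_tnorm_le (h_image ▸ h_norm.le)
  rw [h_image] at h_fixed
  exact congrArg Prod.snd h_fixed

theorem isStablePair_letter_succ (hfac : IsFactorable E η) (h1 : (1 : M) ∉ E) (x : M) (n : ℕ) :
    IsStablePair η (letter η x (n + 1)) (letter η x n) := by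
  rw [letter, remainder_succ]
  exact hfac.isStablePair_snd_fst_snd h1 (remainder η x n)

end IsFactorable

/-- Let `(M, E, η)` be a factorable monoid and `x ∈ M` with word length `N(x) = k`.
Define `x_j = η′(η̄^{j−1}(x))` for `1 ≤ j ≤ k`. Then `x = x_k ⋯ x_1` with all `x_j ∈ E`,
and the tuple `(x_k, …, x_1)` is everywhere stable:
`η(x_{j+1}·x_j) = (x_{j+1}, x_j)` for all `1 ≤ j ≤ k−1`. -/
theorem normalForm_everywhere_stable
    {M : Type*} [Monoid M] (E : Set M) (h1 : (1 : M) ∉ E) (hgen : IsGenSet E)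
    (η : M → M × M) (hfac : IsFactorable E η)
    (x : M) (k : ℕ) (hk : wordLength E x = k)
    (xs : ℕ → M) (hxs : ∀ j, xs j = (η ((fun m => (η m).1)^[j - 1] x)).2) :
    (∀ j, 1 ≤ j → j ≤ k → xs j ∈ E) ∧
    ((List.range k).map (fun i => xs (k - i))).prod = x ∧
    (∀ j, 1 ≤ j → j + 1 ≤ k → η (xs (j + 1) * xs j) = (xs (j + 1), xs j)) := by
  have hη : IsFactorizationMap E η := hfac.1
  obtain rfl : xs = fun j => letter η x (j - 1) := funext hxs
  subst hk
  refine ⟨fun j hj hjk => hη.letter_mem h1 (by omega), hη.prod_letter h1 x, fun j hj _ => ?_⟩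
  obtain ⟨n, rfl⟩ := Nat.exists_eq_add_of_le' hj
  exact hfac.isStablePair_letter_succ h1 x n
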